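/- **Definitions.** Let $p\in\mathbb R[x_1,\dots,x_n]$, let $\mathrm{Support}(p)\subseteq\mathbb N^n$ be the set of exponent vectors of the monomials of $p$ with nonzero coefficient, and let $\mathrm{New}(p)=\mathrm{conv}(\mathrm{Support}(p))\subseteq\mathbb R^n$. The polynomial $p$ is *SOS* if $p=\sum_{i=1}^s q_i^2$ for some polynomials $q_i$. A *face* of a polytope $N\subseteq\mathbb R^n$ is a nonempty subset $F\subseteq N$ such that $F=N$ or there is an affine function $\pi$ on $\mathbb R^n$ with $\pi=0$ on $F$ and $\pi>0$ on $N\setminus F$; it is *proper* if $F\neq N$. A *face cover* of $p$ is a finite family $F_1,\dots,F_u$ of pairwise disjoint faces of $\mathrm{New}(p)$ with $\mathrm{Support}(p)\subseteq F_1\cup\dots\cup F_u$; $p$ is a *convex cover polynomial* if it has a face cover, and a convex cover polynomial *in the strict sense* if it has a face cover by proper faces. For a finite set $G\subseteq\mathbb N^n$, $\mathrm{SOSS}(p,G)$ means: if $p$ is SOS, then $p=\sum_i q_i^2$ for some $q_1,\dots,q_s$ with $\mathrm{Support}(q_i)\subseteq G$ for all $i$. Let $V(p,G)$ be the set of $a\in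 G$ such that $b+r=2a$ with $b,r\in G$ forces $b=r=a$. For $a\in G+G$ define recursively (taking the smallest solution) $\mathrm{Relat}(a)=\{a/2\}$ if $a=\frac a2+\frac a2$ is the only decomposition $a=b+r$ with $b,r\in G$, and otherwise $\mathrm{Relat}(a)=\bigcup(\mathrm{Relat}(2b)\cup\mathrm{Relat}(2r))$ over all $b\ne r$ in $G$ with $b+r=a$; put $\mathrm{Relat}(a)=\emptyset$ if $a\notin G+G$. For $T\subseteq V(p,G)$ let $\sigma(T)=\{r\in G:\mathrm{Relat}(2r)\subseteq T\}$. If $\mathrm{SOSS}(p,G)$ holds, $p$ is a *split polynomial with respect to* pairwise disjoint nonempty subsets $T_1,\dots,T_u$ of $V(p,G)$ if (i) $\mathrm{Relat}(a+b)\subseteq T_i$ for all $i$ and all $a,b\in\sigma(T_i)$, and (ii) for every $a\in\mathrm{Support}(p)$ there is exactly one $i$ with $\mathrm{Relat}(a)\subseteq T_i$. It is a *split polynomial* if this holds for some finite $G$ with $\mathrm{SOSS}(p,G)$ and some $T_1,\dots,T_u$. **Theorem.** 1. Every convex cover polynomial is a split polynomial. 2. More precisely, let $F_1,\dots,F_u$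 be a face cover of $p$, and let $G\subseteq\mathbb N^n$ be a finite set satisfying $\mathrm{SOSS}(p,G)$ and $\mathrm{conv}(G+G)=\mathrm{New}(p)$; if $p$ is not SOS, assume also $\mathrm{Support}(p)\subseteq G+G$ (for SOS $p$ this inclusion is automatic). Then $p$ is a split polynomial with respect to the sets $T_i=\{a\in V(p,G):2a\in F_i\}$, $i=1,\dots,u$. 3. The converse is not true: there is a polynomial $p$ that is a split polynomial with respect to some $T_1,\dots,T_u\subseteq V(p,G)$, even with $u\ge2$ and $\mathrm{conv}(G+G)=\mathrm{New}(p)$, but is not a convex cover polynomial in the strict sense. -/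

import Mathlib

open MvPolynomial
open scoped Pointwise

noncomputable section

/-- Embed an exponent vector `a ∈ ℕⁿ` into `ℝⁿ`. -/
def toR {n : ℕ} (a : Fin n →₀ ℕ) : Fin n → ℝ := fun i => (a i : ℝ)

/-- `p` is a sum of squares of polynomials. -/
def IsSOS {n : ℕ} (p : MvPolynomial (Fin n) ℝ) : Prop :=
  ∃ (s : ℕ) (q : Fin s → MvPolynomial (Fin n) ℝ), p = ∑ i, (q i) ^ 2

/-- The Newton polytope of `p`: convex hull of its support in `ℝⁿ`. -/
def newton {n : ℕ} (p : MvPolynomial (Fin n) ℝ) : Set (Fin n → ℝ) :=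
  convexHull ℝ (toR '' ↑p.support)

/-- `F` is a (nonempty, exposed) face of `N`: `F` is a nonempty subset of `N`, and either `F = N`
or there is an affine function vanishing on `F` and strictly positive on `N \ F`. -/
def IsFace {n : ℕ} (N F : Set (Fin n → ℝ)) : Prop :=
  F.Nonempty ∧ F ⊆ N ∧ (F = N ∨ ∃ π : (Fin n → ℝ) →ᵃ[ℝ] ℝ,
    (∀ x ∈ F, π x = 0) ∧ ∀ x ∈ N \ F, 0 < π x)

/-- `F` is a proper face of `N`. -/
def IsProperFace {n : ℕ} (N F : Set (Fin n → ℝ)) : Prop :=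
  IsFace N F ∧ F ≠ N

/-- `SOSS(p,G)`: whenever `p` is SOS, it has an SOS decomposition all of whose
summands have support contained in `G`. -/
def SOSS {n : ℕ} (p : MvPolynomial (Fin n) ℝ) (G : Finset (Fin n →₀ ℕ)) : Prop :=
  IsSOS p → ∃ (s : ℕ) (q : Fin s → MvPolynomial (Fin n) ℝ),
    p = ∑ i, (q i) ^ 2 ∧ ∀ i, (q i).support ⊆ G

/-- `V(p,G)`: elements `a ∈ G` whose double has the unique decomposition `a + a` in `G + G`. -/
def VSet {n : ℕ} (G : Finset (Fin n →₀ ℕ)) : Set (Fin n →₀ ℕ) :=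
  {a | a ∈ G ∧ ∀ b ∈ G, ∀ r ∈ G, b + r = a + a → b = a ∧ r = a}

/-- Membership in `Relat(a)` (least fixed point of the recursive definition):
`Relat(a) = {a/2}` if the unique decomposition of `a` in `G + G` is `a/2 + a/2`;
otherwise `Relat(a)` is the union of `Relat(2b) ∪ Relat(2r)` over decompositions
`a = b + r` with `b ≠ r`, `b, r ∈ G`; and `Relat(a) = ∅` if `a ∉ G + G`. -/
inductive RelatMem {n : ℕ} (G : Finset (Fin n →₀ ℕ)) :
    (Fin n →₀ ℕ) → (Fin n →₀ ℕ) → Prop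
  | base (a c : Fin n →₀ ℕ) (hc : c ∈ G) (hcc : c + c = a)
      (huniq : ∀ b ∈ G, ∀ r ∈ G, b + r = a → b = c) : RelatMem G a c
  | stepL (a b r v : Fin n →₀ ℕ) (hb : b ∈ G) (hr : r ∈ G) (hne : b ≠ r)
      (hbr : b + r = a) (hv : RelatMem G (b + b) v) : RelatMem G a v
  | stepR (a b r v : Fin n →₀ ℕ) (hb : b ∈ G) (hr : r ∈ G) (hne : b ≠ r)
      (hbr : b + r = a) (hv : RelatMem G (r + r) v) : RelatMem G a v

/-- `Relat(a)` as a set. -/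
def Relat {n : ℕ} (G : Finset (Fin n →₀ ℕ)) (a : Fin n →₀ ℕ) : Set (Fin n →₀ ℕ) :=
  {v | RelatMem G a v}

/-- `σ(T) = {r ∈ G : Relat(2r) ⊆ T}`. -/
def sigmaSet {n : ℕ} (G : Finset (Fin n →₀ ℕ)) (T : Set (Fin n →₀ ℕ)) :
    Set (Fin n →₀ ℕ) :=
  {r | r ∈ G ∧ Relat G (r + r) ⊆ T}

/-- `p` is a split polynomial with respect to `T₁, …, T_u ⊆ V(p,G)`. -/
def IsSplit {n : ℕ} (p : MvPolynomial (Fin n) ℝ) (G : Finset (Fin n →₀ ℕ))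
    (u : ℕ) (T : Fin u → Set (Fin n →₀ ℕ)) : Prop :=
  SOSS p G ∧ (∀ i, T i ⊆ VSet G) ∧ (∀ i, (T i).Nonempty) ∧
  (∀ i j, i ≠ j → Disjoint (T i) (T j)) ∧
  (∀ i, ∀ a ∈ sigmaSet G (T i), ∀ b ∈ sigmaSet G (T i), Relat G (a + b) ⊆ T i) ∧
  ∀ a ∈ p.support, ∃! i, Relat G a ⊆ T i

/-- `p` is a split polynomial: it is one with respect to some finite `G` satisfying `SOSS(p,G)`
and some `T₁, …, T_u ⊆ V(p,G)`. -/
def IsSplitPolynomial {n : ℕ} (p : MvPolynomial (Fin n) ℝ) : Prop :=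
  ∃ (G : Finset (Fin n →₀ ℕ)) (u : ℕ) (T : Fin u → Set (Fin n →₀ ℕ)), IsSplit p G u T

/-- `F₁, …, F_u` are pairwise disjoint faces of `New(p)` covering `Support(p)`. -/
def IsFaceCover {n : ℕ} (p : MvPolynomial (Fin n) ℝ) (u : ℕ)
    (F : Fin u → Set (Fin n → ℝ)) : Prop :=
  (∀ i, IsFace (newton p) (F i)) ∧
  (∀ i j, i ≠ j → Disjoint (F i) (F j)) ∧
  toR '' ↑p.support ⊆ ⋃ i, F i

/-- `p` is a convex cover polynomial; `New(p)` counts as a face of itself. -/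
def IsConvexCover {n : ℕ} (p : MvPolynomial (Fin n) ℝ) : Prop :=
  ∃ (u : ℕ) (F : Fin u → Set (Fin n → ℝ)), IsFaceCover p u F

/-- `p` is a convex cover polynomial in the strict sense, where all the faces are proper. -/
def IsProperConvexCover {n : ℕ} (p : MvPolynomial (Fin n) ℝ) : Prop :=
  ∃ (u : ℕ) (F : Fin u → Set (Fin n → ℝ)),
    IsFaceCover p u F ∧ ∀ i, IsProperFace (newton p) (F i)

/-- `conv(G + G) = New(p)`. -/
def HullEqNewton {n : ℕ} (p : MvPolynomial (Fin n) ℝ) (G : Finset (Fin n →₀ ℕ)) : Prop :=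
  convexHull ℝ (toR '' ((G : Set (Fin n →₀ ℕ)) + (G : Set (Fin n →₀ ℕ)))) = newton p

end

theorem toR_add {n : ℕ} (a b : Fin n →₀ ℕ) : toR (a + b) = toR a + toR b := by
  funext i
  simp [toR]

theorem AffineMap.map_toR_double_add_map_toR_double {n : ℕ} (π : (Fin n → ℝ) →ᵃ[ℝ] ℝ)
    (b r : Fin n →₀ ℕ) :
    π (toR (b + b)) + π (toR (r + r)) = π (toR (b + r)) + π (toR (b + r)) := by
  rw [π.decomp]
  simp only [toR_add, Pi.add_apply, map_add]
  ring

/-! ### Extremal elements of finite sets of exponents -/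

theorem two_mul_sum_sq_lt {n : ℕ} {b r c : Fin n →₀ ℕ} (h : b + r = c + c) (hne : b ≠ r) :
    2 * ∑ i, toR c i ^ 2 < ∑ i, toR b i ^ 2 + ∑ i, toR r i ^ 2 := by
  have hi (i : Fin n) : toR b i + toR r i = toR c i + toR c i := by
    have := congrArg (fun a => toR a i) h
    simpa [toR_add] using this
  obtain ⟨j, hj⟩ : ∃ j, b j ≠ r j := by
    by_contra! H
    exact hne (Finsupp.ext H)
  have hj' : toR b j - toR r j ≠ 0 := sub_ne_zero.mpr (by simpa [toR] using hj)
  rw [Finset.mul_sum, ← Finset.sum_add_distrib]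
  refine Finset.sum_lt_sum (fun i _ => ?_) ⟨j, Finset.mem_univ _, ?_⟩
  · rw [show toR c i = (toR b i + toR r i) / 2 by linarith [hi i]]
    linarith [sq_nonneg (toR b i - toR r i)]
  · rw [show toR c j = (toR b j + toR r j) / 2 by linarith [hi j]]
    linarith [sq_pos_of_ne_zero hj']

theorem eq_and_eq_of_add_eq_add_self {n : ℕ} {b r c : Fin n →₀ ℕ} (h : b + r = c + c)
    (hbr : b = r) : b = c ∧ r = c := by
  subst hbr
  have : b = c := by
    ext i
    have := DFunLike.congr_fun h i
    simp only [Finsupp.add_apply] at this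
    omega
  exact ⟨this, this⟩

/-- A nonempty finite set has a maximizer of a midpoint-affine function that is not the midpoint of
two other points of the set. -/
theorem exists_max_not_midpoint {n : ℕ} (S : Finset (Fin n →₀ ℕ)) (hS : S.Nonempty)
    (f : (Fin n →₀ ℕ) → ℝ) (hf : ∀ b r c, b + r = c + c → f b + f r = f c + f c) :
    ∃ c ∈ S, (∀ b ∈ S, f b ≤ f c) ∧ ∀ b ∈ S, ∀ r ∈ S, b + r = c + c → b = c ∧ r = c := by
  obtain ⟨m, hm, hmax⟩ := S.exists_max_image f hS
  obtain ⟨c, hc, hcmax⟩ := (S.filter fun b => f b = f m).exists_max_image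
    (fun b => ∑ i, toR b i ^ 2) ⟨m, by simp [hm]⟩
  rw [Finset.mem_filter] at hc
  refine ⟨c, hc.1, fun b hb => hc.2 ▸ hmax b hb, fun b hb r hr h => ?_⟩
  by_cases hbr : b = r
  · exact eq_and_eq_of_add_eq_add_self h hbr
  have h1 := hf b r c h
  have hb' := hmax b hb
  have hr' := hmax r hr
  have e1 := hcmax b (by simp only [Finset.mem_filter]; exact ⟨hb, by linarith [hc.2]⟩)
  have e2 := hcmax r (by simp only [Finset.mem_filter]; exact ⟨hr, by linarith [hc.2]⟩)
  linarith [two_mul_sum_sq_lt h hbr]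

/-- If a nonempty subset `P` of `G` contains the ends of every segment in `G` centred at one of its
points, then every affine function attains its maximum over the doubles of `P` at a point of
`V(p,G)`. -/
theorem exists_max_mem_VSet {n : ℕ} (G : Finset (Fin n →₀ ℕ)) (P : (Fin n →₀ ℕ) → Prop)
    (hP : ∃ c ∈ G, P c)
    (hcl : ∀ c ∈ G, P c → ∀ b ∈ G, ∀ r ∈ G, b ≠ r → b + r = c + c → P b ∧ P r)
    (π : (Fin n → ℝ) →ᵃ[ℝ] ℝ) :
    ∃ c ∈ VSet G, P c ∧ ∀ b ∈ G, P b → π (toR (b + b)) ≤ π (toR (c + c)) := by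
  classical
  obtain ⟨c, hc, hmax, hmid⟩ := exists_max_not_midpoint (G.filter P)
    (by obtain ⟨c, h, h'⟩ := hP; exact ⟨c, by simp [h, h']⟩) (fun a => π (toR (a + a)))
    (fun b r c h => by
      rw [π.map_toR_double_add_map_toR_double, h])
  simp only [Finset.mem_filter] at hc hmax hmid
  refine ⟨c, ⟨hc.1, fun b hb r hr h => ?_⟩, hc.2, fun b hb hPb => hmax b ⟨hb, hPb⟩⟩
  by_cases hbr : b = r
  · exact eq_and_eq_of_add_eq_add_self h hbr
  · have := hcl c hc.1 hc.2 b hb r hr hbr h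
    exact hmid b ⟨hb, this.1⟩ r ⟨hr, this.2⟩ h

/-! ### The sets `Relat` -/

theorem mem_Relat_double {n : ℕ} {G : Finset (Fin n →₀ ℕ)} {v : Fin n →₀ ℕ} (hv : v ∈ VSet G) :
    v ∈ Relat G (v + v) :=
  .base _ v hv.1 rfl fun b hb r hr h => (hv.2 b hb r hr h).1

theorem Relat_double_subset {n : ℕ} {G : Finset (Fin n →₀ ℕ)} {b r : Fin n →₀ ℕ}
    (hb : b ∈ G) (hr : r ∈ G) (hne : b ≠ r) :
    Relat G (b + b) ⊆ Relat G (b + r) ∧ Relat G (r + r) ⊆ Relat G (b + r) :=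
  ⟨fun v hv => .stepL _ b r v hb hr hne rfl hv, fun v hv => .stepR _ b r v hb hr hne rfl hv⟩

theorem Relat_subset_VSet {n : ℕ} (G : Finset (Fin n →₀ ℕ)) (a : Fin n →₀ ℕ) :
    Relat G a ⊆ VSet G := by
  intro v hv
  induction hv with
  | base a c hc hcc huniq =>
    subst hcc
    exact ⟨hc, fun b hb r hr h => ⟨huniq b hb r hr h, huniq r hr b hb (by rwa [add_comm])⟩⟩
  | stepL a b r v hb hr hne hbr hv ih => exact ih
  | stepR a b r v hb hr hne hbr hv ih => exact ih

theorem Relat_double_of_mem_VSet {n : ℕ} {G : Finset (Fin n →₀ ℕ)} {v : Fin n →₀ ℕ}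
    (hv : v ∈ VSet G) : Relat G (v + v) = {v} := by
  refine Set.Subset.antisymm (fun w hw => ?_) (Set.singleton_subset_iff.mpr (mem_Relat_double hv))
  cases hw with
  | base _ _ hc hcc _ => exact (hv.2 w hc w hc hcc).1
  | stepL _ b r _ hb hr hne hbr _ =>
    obtain ⟨rfl, rfl⟩ := hv.2 b hb r hr hbr
    exact absurd rfl hne
  | stepR _ b r _ hb hr hne hbr _ =>
    obtain ⟨rfl, rfl⟩ := hv.2 b hb r hr hbr
    exact absurd rfl hne

theorem Relat_double_nonempty {n : ℕ} {G : Finset (Fin n →₀ ℕ)} {c : Fin n →₀ ℕ} (hc : c ∈ G) :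
    (Relat G (c + c)).Nonempty := by
  by_contra! H
  obtain ⟨v, hv, hv', -⟩ := exists_max_mem_VSet G (fun c => Relat G (c + c) = ∅) ⟨c, hc, H⟩
    (fun c _ hc b hb r hr hne h => by
      rw [← h] at hc
      exact (Relat_double_subset hb hr hne).imp (fun h => Set.subset_empty_iff.mp (hc ▸ h))
        fun h => Set.subset_empty_iff.mp (hc ▸ h)) 0
  exact Set.notMem_empty v (hv' ▸ mem_Relat_double hv)

theorem Relat_add_nonempty {n : ℕ} {G : Finset (Fin n →₀ ℕ)} {b r : Fin n →₀ ℕ}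
    (hb : b ∈ G) (hr : r ∈ G) : (Relat G (b + r)).Nonempty := by
  by_cases hne : b = r
  · exact hne ▸ Relat_double_nonempty hb
  · exact (Relat_double_nonempty hb).mono (Relat_double_subset hb hr hne).1

theorem VSet_nonempty {n : ℕ} {G : Finset (Fin n →₀ ℕ)} (hG : G.Nonempty) : (VSet G).Nonempty :=
  let ⟨_, hc⟩ := hG
  (Relat_double_nonempty hc).mono (Relat_subset_VSet G _)

/-! ### Faces of the convex hull of `G + G` -/

theorem IsFace.exists_affineMap {n : ℕ} {N F : Set (Fin n → ℝ)} (h : IsFace N F) :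
    ∃ π : (Fin n → ℝ) →ᵃ[ℝ] ℝ, (∀ x ∈ N, 0 ≤ π x) ∧ ∀ x ∈ N, x ∈ F ↔ π x = 0 := by
  obtain ⟨-, hsub, rfl | ⟨π, h0, hpos⟩⟩ := h
  · exact ⟨0, fun x _ => le_rfl, fun x hx => by simp [hx]⟩
  · refine ⟨π, fun x hx => ?_, fun x hx => ⟨h0 x, fun h => ?_⟩⟩
    · by_cases hF : x ∈ F
      · exact (h0 x hF).ge
      · exact (hpos x ⟨hx, hF⟩).le
    · by_contra hF
      exact (hpos x ⟨hx, hF⟩).ne' h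

theorem toR_add_mem_hull {n : ℕ} {G : Finset (Fin n →₀ ℕ)} {b r : Fin n →₀ ℕ}
    (hb : b ∈ G) (hr : r ∈ G) :
    toR (b + r) ∈ convexHull ℝ (toR '' ((G : Set (Fin n →₀ ℕ)) + (G : Set (Fin n →₀ ℕ)))) :=
  subset_convexHull ℝ _ ⟨_, Set.add_mem_add hb hr, rfl⟩

section Face

variable {n : ℕ} {G : Finset (Fin n →₀ ℕ)} {F : Set (Fin n → ℝ)}

theorem IsFace.toR_add_mem_iff
    (hF : IsFace (convexHull ℝ (toR '' ((G : Set (Fin n →₀ ℕ)) + (G : Set (Fin n →₀ ℕ))))) F)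
    {b r : Fin n →₀ ℕ} (hb : b ∈ G) (hr : r ∈ G) :
    toR (b + r) ∈ F ↔ toR (b + b) ∈ F ∧ toR (r + r) ∈ F := by
  obtain ⟨π, hnn, hz⟩ := hF.exists_affineMap
  have h1 := hnn _ (toR_add_mem_hull hb hb)
  have h2 := hnn _ (toR_add_mem_hull hr hr)
  rw [hz _ (toR_add_mem_hull hb hr), hz _ (toR_add_mem_hull hb hb),
    hz _ (toR_add_mem_hull hr hr)]
  have h := π.map_toR_double_add_map_toR_double b r
  constructor
  · intro h0
    constructor <;> linarith
  · rintro ⟨h3, h4⟩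
    linarith

theorem IsFace.toR_double_mem_of_mem_Relat
    (hF : IsFace (convexHull ℝ (toR '' ((G : Set (Fin n →₀ ℕ)) + (G : Set (Fin n →₀ ℕ))))) F)
    {a v : Fin n →₀ ℕ} (ha : toR a ∈ F) (hv : v ∈ Relat G a) : toR (v + v) ∈ F := by
  induction hv with
  | base a c hc hcc huniq => rwa [hcc]
  | stepL a b r v hb hr hne hbr hv ih => exact ih ((hF.toR_add_mem_iff hb hr).mp (hbr ▸ ha)).1
  | stepR a b r v hb hr hne hbr hv ih => exact ih ((hF.toR_add_mem_iff hb hr).mp (hbr ▸ ha)).2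

theorem IsFace.toR_double_mem_of_Relat_subset
    (hF : IsFace (convexHull ℝ (toR '' ((G : Set (Fin n →₀ ℕ)) + (G : Set (Fin n →₀ ℕ))))) F)
    {c : Fin n →₀ ℕ} (hc : c ∈ G)
    (h : Relat G (c + c) ⊆ {a | a ∈ VSet G ∧ toR (a + a) ∈ F}) : toR (c + c) ∈ F := by
  obtain ⟨π, hnn, hz⟩ := hF.exists_affineMap
  obtain ⟨v, hv, hvT, hmax⟩ := exists_max_mem_VSet G
    (fun c => Relat G (c + c) ⊆ {a | a ∈ VSet G ∧ toR (a + a) ∈ F}) ⟨c, hc, h⟩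
    (fun c _ hc b hb r hr hne h => by
      rw [← h] at hc
      exact (Relat_double_subset hb hr hne).imp (fun h => h.trans hc) fun h => h.trans hc) π
  have h0 : π (toR (v + v)) = 0 :=
    (hz _ (toR_add_mem_hull hv.1 hv.1)).mp (hvT (mem_Relat_double hv)).2
  rw [hz _ (toR_add_mem_hull hc hc)]
  exact le_antisymm (h0 ▸ hmax c hc h) (hnn _ (toR_add_mem_hull hc hc))

theorem IsFace.exists_mem_VSet
    (hF : IsFace (convexHull ℝ (toR '' ((G : Set (Fin n →₀ ℕ)) + (G : Set (Fin n →₀ ℕ))))) F) :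
    ∃ a ∈ VSet G, toR (a + a) ∈ F := by
  obtain ⟨π, hnn, hz⟩ := hF.exists_affineMap
  obtain ⟨b, hb, r, hr, hbr⟩ : ∃ b ∈ G, ∃ r ∈ G, toR (b + r) ∈ F := by
    by_contra! H
    obtain ⟨x, hx⟩ := hF.1
    have hconv : Convex ℝ {x | 0 < π x} := (convex_Ioi (0 : ℝ)).affine_preimage π
    have hpos : 0 < π x := convexHull_min (t := {x | 0 < π x}) (by
      rintro _ ⟨_, ⟨b, hb, r, hr, rfl⟩, rfl⟩
      exact (hnn _ (toR_add_mem_hull hb hr)).lt_of_ne' fun h =>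
        H b hb r hr ((hz _ (toR_add_mem_hull hb hr)).mpr h)) hconv (hF.2.1 hx)
    exact hpos.ne' ((hz x (hF.2.1 hx)).mp hx)
  obtain ⟨v, hv⟩ := Relat_add_nonempty hb hr
  exact ⟨v, Relat_subset_VSet G _ hv, hF.toR_double_mem_of_mem_Relat hbr hv⟩

end Face

/-! ### Supports of sums of squares -/

theorem support_sum_sq_subset {n s : ℕ} {G : Finset (Fin n →₀ ℕ)}
    {q : Fin s → MvPolynomial (Fin n) ℝ} (hq : ∀ i, (q i).support ⊆ G) :
    ((∑ i, q i ^ 2).support : Set (Fin n →₀ ℕ)) ⊆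
      (G : Set (Fin n →₀ ℕ)) + (G : Set (Fin n →₀ ℕ)) := by
  classical
  intro a ha
  obtain ⟨i, -, hi⟩ := Finset.mem_biUnion.mp (support_sum ha)
  rw [sq] at hi
  obtain ⟨b, hb, r, hr, rfl⟩ := Finset.mem_add.mp (support_mul _ _ hi)
  exact Set.add_mem_add (hq i hb) (hq i hr)

theorem coeff_double_sum_sq {n s : ℕ} {G : Finset (Fin n →₀ ℕ)}
    {q : Fin s → MvPolynomial (Fin n) ℝ} (hq : ∀ i, (q i).support ⊆ G)
    {v : Fin n →₀ ℕ} (hv : v ∈ VSet G) :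
    coeff (v + v) (∑ i, q i ^ 2) = ∑ i, coeff v (q i) ^ 2 := by
  classical
  rw [coeff_sum]
  refine Finset.sum_congr rfl fun i _ => ?_
  rw [sq, sq, coeff_mul, Finset.sum_eq_single (v, v)]
  · rintro ⟨b, r⟩ hbr hne
    by_contra h
    have hb : b ∈ G := hq i (mem_support_iff.mpr (left_ne_zero_of_mul h))
    have hr : r ∈ G := hq i (mem_support_iff.mpr (right_ne_zero_of_mul h))
    obtain ⟨rfl, rfl⟩ := hv.2 b hb r hr (Finset.HasAntidiagonal.mem_antidiagonal.mp hbr)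
    exact hne rfl
  · intro h
    simp at h

/-- The exponents occurring in a sum of squares `∑ qᵢ²` span half of its Newton polytope. -/
theorem hullEqNewton_sum_sq {n s : ℕ} (q : Fin s → MvPolynomial (Fin n) ℝ) :
    HullEqNewton (∑ i, q i ^ 2) (Finset.univ.biUnion fun i => (q i).support) := by
  classical
  set G := Finset.univ.biUnion fun i => (q i).support with hG
  have hq (i) : (q i).support ⊆ G :=
    Finset.subset_biUnion_of_mem (fun i => (q i).support) (Finset.mem_univ i)
  set N := newton (∑ i, q i ^ 2) with hN
  have hVmem {v} (hv : v ∈ VSet G) : toR (v + v) ∈ N := by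
    refine subset_convexHull ℝ _ ⟨_, Finset.mem_coe.mpr (mem_support_iff.mpr ?_), rfl⟩
    rw [coeff_double_sum_sq hq hv]
    obtain ⟨i, -, hi⟩ := Finset.mem_biUnion.mp hv.1
    exact (Finset.sum_pos' (fun j _ => sq_nonneg (coeff v (q j)))
      ⟨i, Finset.mem_univ i, sq_pos_of_ne_zero (mem_support_iff.mp hi)⟩).ne'
  have hclosed : IsClosed N :=
    ((Finset.finite_toSet _).image _).isClosed_convexHull ℝ
  have hdouble {c} (hc : c ∈ G) : toR (c + c) ∈ N := by
    by_contra hcN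
    obtain ⟨f, t, hft, htc⟩ := geometric_hahn_banach_closed_point (convex_convexHull ℝ _) hclosed hcN
    obtain ⟨v, hv, -, hmax⟩ := exists_max_mem_VSet G (fun _ => True) ⟨c, hc, trivial⟩
      (fun _ _ _ _ _ _ _ _ _ => ⟨trivial, trivial⟩) (f : (Fin n → ℝ) →ₗ[ℝ] ℝ).toAffineMap
    have h1 := hmax c hc trivial
    have h2 := hft _ (hVmem hv)
    simp only [LinearMap.coe_toAffineMap, ContinuousLinearMap.coe_coe] at h1
    linarith
  refine Set.Subset.antisymm (convexHull_min ?_ (convex_convexHull ℝ _))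
    (convexHull_mono (Set.image_mono (support_sum_sq_subset hq)))
  rintro _ ⟨_, ⟨b, hb, r, hr, rfl⟩, rfl⟩
  have h : toR (b + r) = (1 / 2 : ℝ) • toR (b + b) + (1 / 2 : ℝ) • toR (r + r) := by
    simp only [toR_add]
    module
  simp only [h]
  exact convex_convexHull ℝ _ (hdouble hb) (hdouble hr) (by norm_num) (by norm_num) (by norm_num)

/-! ### Convex cover polynomials are split -/

theorem IsFaceCover.isSplit {n : ℕ} {p : MvPolynomial (Fin n) ℝ} {u : ℕ}
    {F : Fin u → Set (Fin n → ℝ)} (hF : IsFaceCover p u F) {G : Finset (Fin n →₀ ℕ)}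
    (hG : SOSS p G) (hN : HullEqNewton p G)
    (hp : IsSOS p ∨ (p.support : Set (Fin n →₀ ℕ)) ⊆
      (G : Set (Fin n →₀ ℕ)) + (G : Set (Fin n →₀ ℕ))) :
    IsSplit p G u (fun i => {a | a ∈ VSet G ∧ toR (a + a) ∈ F i}) := by
  have hsupp : (p.support : Set (Fin n →₀ ℕ)) ⊆
      (G : Set (Fin n →₀ ℕ)) + (G : Set (Fin n →₀ ℕ)) := by
    rcases hp with hp | hp
    · obtain ⟨s, q, rfl, hq⟩ := hG hp
      exact support_sum_sq_subset hq
    · exact hp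
  obtain ⟨hface, hdisj, hcov⟩ := hF
  rw [← hN] at hface
  refine ⟨hG, fun i a ha => ha.1, fun i => (hface i).exists_mem_VSet, fun i j hij => ?_,
    fun i a ha b hb v hv => ⟨Relat_subset_VSet G _ hv, ?_⟩, fun a ha => ?_⟩
  · exact Set.disjoint_left.mpr fun a hi hj =>
      Set.disjoint_left.mp (hdisj i j hij) hi.2 hj.2
  · exact (hface i).toR_double_mem_of_mem_Relat (((hface i).toR_add_mem_iff ha.1 hb.1).mpr
      ⟨(hface i).toR_double_mem_of_Relat_subset ha.1 ha.2,
        (hface i).toR_double_mem_of_Relat_subset hb.1 hb.2⟩) hv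
  · obtain ⟨i, hi⟩ := Set.mem_iUnion.mp (hcov ⟨a, ha, rfl⟩)
    have hRi {v} (hv : v ∈ Relat G a) : toR (v + v) ∈ F i :=
      (hface i).toR_double_mem_of_mem_Relat hi hv
    refine ⟨i, fun v hv => ⟨Relat_subset_VSet G _ hv, hRi hv⟩, fun j hj => ?_⟩
    obtain ⟨b, hb, r, hr, rfl⟩ := hsupp ha
    obtain ⟨v, hv⟩ := Relat_add_nonempty hb hr
    by_contra hne
    exact Set.disjoint_left.mp (hdisj j i hne) (hj hv).2 (hRi hv)

/-- The trivial splitting, with all of `V(p,G)` as its only part. -/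
theorem SOSS.isSplit_VSet {n : ℕ} {p : MvPolynomial (Fin n) ℝ} {G : Finset (Fin n →₀ ℕ)}
    (hG : SOSS p G) (hne : G.Nonempty) : IsSplit p G 1 fun _ => VSet G :=
  ⟨hG, fun _ => subset_rfl, fun _ => VSet_nonempty hne,
    fun i j hij => absurd (Subsingleton.elim i j) hij,
    fun _ _ _ _ _ => Relat_subset_VSet G _,
    fun _ _ => ⟨0, Relat_subset_VSet G _, fun _ _ => Subsingleton.elim _ _⟩⟩

theorem IsConvexCover.isSplitPolynomial {n : ℕ} {p : MvPolynomial (Fin n) ℝ}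
    (h : IsConvexCover p) : IsSplitPolynomial p := by
  classical
  by_cases hp : IsSOS p
  · obtain ⟨u, F, hF⟩ := h
    have hp' := hp
    obtain ⟨s, q, rfl⟩ := hp'
    exact ⟨_, u, _, hF.isSplit (fun _ => ⟨s, q, rfl, fun i =>
      Finset.subset_biUnion_of_mem (fun i => (q i).support) (Finset.mem_univ i)⟩)
      (hullEqNewton_sum_sq q) (Or.inl hp)⟩
  · exact ⟨insert 0 p.support, 1, _,
      SOSS.isSplit_VSet (fun h => absurd h hp) (Finset.insert_nonempty _ _)⟩

/-! ### A split polynomial without a cover by proper faces -/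

/-- A splitting into singletons, for a sum of squares of monomials with exponents in a set none of
whose points is a midpoint of two others. -/
theorem isSplit_singletons {n u : ℕ} {G : Finset (Fin n →₀ ℕ)} (hG : ∀ a ∈ G, a ∈ VSet G)
    {e : Fin u → Fin n →₀ ℕ} (he : Function.Injective e) (heG : ∀ i, e i ∈ G) :
    IsSplit (∑ i, (monomial (e i) (1 : ℝ)) ^ 2) G u fun i => {e i} := by
  have hs : ∀ i, (monomial (e i) (1 : ℝ)).support ⊆ G := fun i a ha => by
    rw [Finset.mem_singleton.mp (support_monomial_subset ha)]
    exact heG i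
  refine ⟨fun _ => ⟨u, _, rfl, hs⟩, fun i => Set.singleton_subset_iff.mpr (hG _ (heG i)),
    fun i => Set.singleton_nonempty _, fun i j hij => ?_, fun i a ha b hb => ?_, fun a ha => ?_⟩
  · exact Set.disjoint_singleton.mpr (he.ne hij)
  · have h {a} (ha : a ∈ sigmaSet G {e i}) : a = e i :=
      ha.2 (mem_Relat_double (hG a ha.1))
    rw [h ha, h hb, Relat_double_of_mem_VSet (hG _ (heG i))]
  · classical
    obtain ⟨i, -, hi⟩ := Finset.mem_biUnion.mp (support_sum ha)
    rw [monomial_pow] at hi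
    obtain rfl : a = e i + e i := by
      rw [← two_nsmul]
      exact Finset.mem_singleton.mp (support_monomial_subset hi)
    rw [Relat_double_of_mem_VSet (hG _ (heG i))]
    exact ⟨i, subset_rfl, fun j hj => (he (Set.singleton_subset_singleton.mp hj)).symm⟩

/-- A face containing a point in the relative interior of a segment that spans `N` is all of `N`. -/
theorem IsFace.eq_of_mem_openSegment {n : ℕ} {x y z : Fin n → ℝ} {N F : Set (Fin n → ℝ)}
    (hF : IsFace N F) (hN : N ⊆ segment ℝ x y) (hx : x ∈ N) (hy : y ∈ N)
    (hz : z ∈ openSegment ℝ x y) (hzN : z ∈ N) (hzF : z ∈ F) : F = N := by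
  obtain ⟨π, hnn, h0⟩ := hF.exists_affineMap
  have hcomb {a b : ℝ} (hab : a + b = 1) : π (a • x + b • y) = a * π x + b * π y := by
    rw [Convex.combo_affine_apply hab, smul_eq_mul, smul_eq_mul]
  have hπx := hnn x hx
  have hπy := hnn y hy
  obtain ⟨a, b, ha, hb, hab, rfl⟩ := hz
  have hπz := (h0 _ hzN).mp hzF
  rw [hcomb hab] at hπz
  have hx0 : π x = 0 := by nlinarith [mul_nonneg ha.le hπx, mul_nonneg hb.le hπy]
  have hy0 : π y = 0 := by nlinarith [mul_nonneg ha.le hπx, mul_nonneg hb.le hπy]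
  refine hF.2.1.antisymm fun w hw => (h0 w hw).mpr ?_
  obtain ⟨c, d, -, -, hcd, rfl⟩ := hN hw
  rw [hcomb hcd, hx0, hy0]
  ring

theorem exists_isSplit_not_isProperConvexCover :
    ∃ (n : ℕ) (p : MvPolynomial (Fin n) ℝ) (G : Finset (Fin n →₀ ℕ)) (u : ℕ)
      (T : Fin u → Set (Fin n →₀ ℕ)),
      2 ≤ u ∧ HullEqNewton p G ∧ IsSplit p G u T ∧ ¬ IsProperConvexCover p := by
  classical
  let k : Fin 3 → ℕ := ![0, 1, 3]
  let e : Fin 3 → Fin 1 →₀ ℕ := fun i => Finsupp.single 0 (k i)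
  let q : Fin 3 → MvPolynomial (Fin 1) ℝ := fun i => monomial (e i) 1
  set G : Finset (Fin 1 →₀ ℕ) := Finset.univ.biUnion fun i => (q i).support with hG
  have hmem (a) : a ∈ G ↔ ∃ i, a = e i := by
    simp [hG, q, support_monomial]
  have hadd (i j l : Fin 3) : e i + e j = e l + e l ↔ k i + k j = k l + k l := by
    simp only [e, ← Finsupp.single_add]
    exact (Finsupp.single_injective 0).eq_iff
  have hk : ∀ i j l : Fin 3, k i + k j = k l + k l → i = l ∧ j = l := by decide
  have hV : ∀ a ∈ G, a ∈ VSet G := by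
    intro a ha
    refine ⟨ha, fun b hb r hr h => ?_⟩
    obtain ⟨l, rfl⟩ := (hmem _).mp ha
    obtain ⟨i, rfl⟩ := (hmem _).mp hb
    obtain ⟨j, rfl⟩ := (hmem _).mp hr
    obtain ⟨rfl, rfl⟩ := hk i j l ((hadd i j l).mp h)
    exact ⟨rfl, rfl⟩
  have he : Function.Injective e := fun i j h =>
    (hk i j j ((hadd i j j).mp (by rw [h]))).1
  have heG (i) : e i ∈ G := (hmem _).mpr ⟨i, rfl⟩
  have hN : HullEqNewton (∑ i, q i ^ 2) G := hullEqNewton_sum_sq q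
  have hsupp (i) : e i + e i ∈ (∑ i, q i ^ 2).support := by
    rw [mem_support_iff, coeff_double_sum_sq (G := G)
      (fun i => Finset.subset_biUnion_of_mem (fun i => (q i).support) (Finset.mem_univ i))
      (hV _ (heG i))]
    refine (Finset.sum_pos' (fun i _ => sq_nonneg _) ⟨i, Finset.mem_univ i, ?_⟩).ne'
    simp [q]
  have hnewt (i) : toR (e i + e i) ∈ newton (∑ i, q i ^ 2) :=
    subset_convexHull ℝ _ ⟨_, hsupp i, rfl⟩
  have hval (i) : toR (e i + e i) = fun _ => (2 * k i : ℝ) := by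
    funext x
    fin_cases x
    simp [toR, e, two_mul]
  refine ⟨1, ∑ i, q i ^ 2, G, 3, fun i => {e i}, by norm_num, hN,
    isSplit_singletons hV he heG, ?_⟩
  rintro ⟨u, F, ⟨-, -, hcov⟩, hprop⟩
  obtain ⟨i, hi⟩ := Set.mem_iUnion.mp (hcov ⟨_, hsupp 1, rfl⟩)
  refine (hprop i).2 ((hprop i).1.eq_of_mem_openSegment ?_ (hnewt 0) (hnewt 2) ?_ (hnewt 1) hi)
  · refine convexHull_min ?_ (convex_segment _ _)
    rintro _ ⟨a, ha, rfl⟩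
    obtain ⟨j, -, hj⟩ := Finset.mem_biUnion.mp (support_sum ha)
    simp only [q, monomial_pow] at hj
    obtain rfl : a = e j + e j := by
      rw [← two_nsmul]
      exact Finset.mem_singleton.mp (support_monomial_subset hj)
    refine ⟨1 - k j / 3, k j / 3, ?_, ?_, by ring, ?_⟩
    · fin_cases j <;> norm_num [k]
    · positivity
    · simp only [hval]
      funext x
      simp [k]
      ring
  · refine ⟨2 / 3, 1 / 3, by norm_num, by norm_num, by norm_num, ?_⟩
    simp only [hval]
    funext x
    simp [k]
    norm_num

/-- (1) Every convex cover polynomial is a split polynomial.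
(2) More precisely, it is one with respect to `Tᵢ = {a ∈ V(p,G) : 2a ∈ Fᵢ}`, for all pairwise
disjoint faces `F₁, …, F_u` of `New(p)` covering `Support(p)` and all finite `G` with `SOSS(p,G)` and
`conv(G + G) = New(p)`; if `p` is not SOS, then `G` must in addition satisfy `Support(p) ⊆ G + G`
(for SOS `p` this is automatic).
(3) The converse fails when only proper faces are allowed in the cover. -/
theorem statement9 :
    (∀ (n : ℕ) (p : MvPolynomial (Fin n) ℝ), IsConvexCover p → IsSplitPolynomial p) ∧
    (∀ (n : ℕ) (p : MvPolynomial (Fin n) ℝ) (u : ℕ) (F : Fin u → Set (Fin n → ℝ)),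
      IsFaceCover p u F →
      ∀ G : Finset (Fin n →₀ ℕ), SOSS p G → HullEqNewton p G →
        (IsSOS p ∨ (p.support : Set (Fin n →₀ ℕ)) ⊆
          (G : Set (Fin n →₀ ℕ)) + (G : Set (Fin n →₀ ℕ))) →
        IsSplit p G u (fun i => {a | a ∈ VSet G ∧ toR (a + a) ∈ F i})) ∧
    (∃ (n : ℕ) (p : MvPolynomial (Fin n) ℝ) (G : Finset (Fin n →₀ ℕ)) (u : ℕ)
      (T : Fin u → Set (Fin n →₀ ℕ)),
      2 ≤ u ∧ HullEqNewton p G ∧ IsSplit p G u T ∧ ¬ IsProperConvexCover p) :=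
  ⟨fun _ _ h => h.isSplitPolynomial, fun _ _ _ _ hF _ hG hN hp => hF.isSplit hG hN hp,
    exists_isSplit_not_isProperConvexCover⟩
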